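/- arXiv:2103.11893 — 2 statements merged into one kernel-verified Lean document; each statement's English description precedes it below -/
import Mathlib

section
/- (Positivity of the detection margin) For every integer M ≥ 1 and every real τ with 0 < τ ≤ 1/√(6M), one has (2/3)·√((1−τ²)/τ²) > √( (5/4)M − 7/4 + 1/(2M) ) + √(M/12); that is, the quantity F = (2/3)·√((1−τ²)/τ²) − ( √( (5/4)M − 7/4 + 1/(2M) ) + √(M/12) ) is strictly positive. -/
/-!
The bound on `τ` gives `(1 - τ²)/τ² ≥ 6M - 1`, so the square of the right-hand side is at least
`8M/3 - 4/9`. By `(a + b)² ≤ 2 (a² + b²)` the square of the left-hand side is at most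
`8M/3 - 7/2 + 1/M ≤ 8M/3 - 5/2`. The first radicand equals `(5M - 2)(M - 1)/(4M) ≥ 0`, so its
square root does square back to it.
-/

/-- **Positivity of the detection margin.**  For every integer `M ≥ 1` and every real
`τ` with `0 < τ ≤ 1/√(6M)`, one has
`(2/3)√((1-τ²)/τ²) > √((5/4)M - 7/4 + 1/(2M)) + √(M/12)`; i.e. the detection margin
`F = (2/3)√((1-τ²)/τ²) - (√((5/4)M - 7/4 + 1/(2M)) + √(M/12))` is strictly positive. -/
theorem detection_margin_positive
    (M : ℕ) (hM : 1 ≤ M) (τ : ℝ) (hτ0 : 0 < τ)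
    (hτ1 : τ ≤ 1 / Real.sqrt (6 * (M : ℝ))) :
    Real.sqrt ((5 / 4) * (M : ℝ) - 7 / 4 + 1 / (2 * (M : ℝ))) +
        Real.sqrt ((M : ℝ) / 12) <
      (2 / 3) * Real.sqrt ((1 - τ ^ 2) / τ ^ 2) := by
  have hM' : (1 : ℝ) ≤ M := by exact_mod_cast hM
  have hM0 : (0 : ℝ) < M := by linarith
  have hinv : 1 / (2 * (M : ℝ)) ≤ 1 / 2 := by
    rw [div_le_div_iff₀ (by positivity) (by norm_num)]
    linarith
  have hA : 0 ≤ (5 / 4) * (M : ℝ) - 7 / 4 + 1 / (2 * (M : ℝ)) := by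
    have h : (5 / 4) * (M : ℝ) - 7 / 4 + 1 / (2 * (M : ℝ))
        = (5 * M - 2) * (M - 1) / (4 * M) := by
      field_simp
      ring
    rw [h]
    exact div_nonneg (mul_nonneg (by linarith) (by linarith)) (by positivity)
  have hτsq : τ ^ 2 ≤ 1 / (6 * (M : ℝ)) := by
    have h := pow_le_pow_left₀ hτ0.le hτ1 2
    rwa [div_pow, one_pow, Real.sq_sqrt (by positivity)] at h
  have hC : 6 * (M : ℝ) - 1 ≤ (1 - τ ^ 2) / τ ^ 2 := by
    rw [le_div_iff₀ (by positivity)]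
    rw [le_div_iff₀ (by positivity)] at hτsq
    linarith
  have ha := Real.sq_sqrt hA
  have hb := Real.sq_sqrt (show 0 ≤ (M : ℝ) / 12 by positivity)
  have hc := Real.sq_sqrt (show 0 ≤ (1 - τ ^ 2) / τ ^ 2 by linarith)
  refine lt_of_pow_lt_pow_left₀ 2 (by positivity) ?_
  -- `(a + b)² ≤ 2 (a² + b²) ≤ 8M/3 - 5/2 < 4 (6M - 1) / 9`
  refine lt_of_le_of_lt add_sq_le ?_
  rw [mul_pow, ha, hb, hc]
  linarith
end

section
/- (Lower bound on the noise-strength function) For every integer M ≥ 1 and every real τ with 0 < τ ≤ 1/√(6M), the quantity f(M, τ) = F/G, where F = (2/3)·√((1−τ²)/τ²) − ( √( (5/4)M − 7/4 + 1/(2M) ) + √(M/12) ) and G = (4/3)·√(1−τ²) + 1, satisfies f(M, τ) ≥ 0.03·√M. -/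
/-! Put `s = √M`. Since `τ² ≤ 1/(6M)`, one has `(1 - τ²)/τ² ≥ 6M - 1 ≥ 5M`, so the first
term of the numerator is at least `(2/3)√5 s`. As `1/(2M) ≤ 1/2`, the two subtracted roots are at
most `√(5/4) s` and `√(1/12) s`. The denominator is at most `7/3`, and the claim follows from
`(2/3)√5 - √(5/4) - √(1/12) > 0.07 = 0.03 · 7/3`, verified with decimal approximations. -/

/-- **Lower bound on the noise-strength function** (eq. (3.12)).  For every integer
`M ≥ 1` and every real `τ` with `0 < τ ≤ 1/√(6M)`, the quantity `f(M, τ) = F/G`, where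
`F = (2/3)√((1-τ²)/τ²) - (√((5/4)M - 7/4 + 1/(2M)) + √(M/12))` and
`G = (4/3)√(1-τ²) + 1`, satisfies `f(M, τ) ≥ 0.03 √M`. -/
theorem noise_strength_function_lower_bound
    (M : ℕ) (hM : 1 ≤ M) (τ : ℝ) (hτ0 : 0 < τ)
    (hτ1 : τ ≤ 1 / Real.sqrt (6 * (M : ℝ))) :
    0.03 * Real.sqrt (M : ℝ) ≤
      ((2 / 3) * Real.sqrt ((1 - τ ^ 2) / τ ^ 2) -
          (Real.sqrt ((5 / 4) * (M : ℝ) - 7 / 4 + 1 / (2 * (M : ℝ))) +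
            Real.sqrt ((M : ℝ) / 12))) /
        ((4 / 3) * Real.sqrt (1 - τ ^ 2) + 1) := by
  have hM1 : (1 : ℝ) ≤ (M : ℝ) := by exact_mod_cast hM
  set m : ℝ := (M : ℝ)
  set s : ℝ := Real.sqrt m
  have hs0 : 0 ≤ s := Real.sqrt_nonneg m
  have hss : s ^ 2 = m := Real.sq_sqrt (by linarith)
  have hτ2 : 0 < τ ^ 2 := by positivity
  have hτM : τ ^ 2 * (6 * m) ≤ 1 := by
    have h6 : 0 < Real.sqrt (6 * m) := Real.sqrt_pos.mpr (by linarith)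
    have h1 : τ * Real.sqrt (6 * m) ≤ 1 := (le_div_iff₀ h6).mp hτ1
    have h2 : (τ * Real.sqrt (6 * m)) ^ 2 ≤ 1 := pow_le_one₀ (by positivity) h1
    rwa [mul_pow, Real.sq_sqrt (by linarith)] at h2
  have hA : 2.236 * s ≤ Real.sqrt ((1 - τ ^ 2) / τ ^ 2) := by
    apply Real.le_sqrt_of_sq_le
    -- `(1 - τ²)/τ² ≥ 6m - 1 ≥ 5m`, and `2.236² < 5`.
    rw [le_div_iff₀ hτ2, mul_pow, hss]
    nlinarith
  have hB : Real.sqrt ((5 / 4) * m - 7 / 4 + 1 / (2 * m)) ≤ 1.1181 * s := by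
    apply Real.sqrt_le_iff.mpr ⟨by positivity, ?_⟩
    have h : 1 / (2 * m) ≤ 1 / 2 := by
      apply one_div_le_one_div_of_le <;> linarith
    rw [mul_pow, hss]
    linarith
  have hC : Real.sqrt (m / 12) ≤ 0.2887 * s := by
    apply Real.sqrt_le_iff.mpr ⟨by positivity, ?_⟩
    rw [mul_pow, hss]
    linarith
  have hD : Real.sqrt (1 - τ ^ 2) ≤ 1 := Real.sqrt_le_one.mpr (by linarith)
  have hD0 := Real.sqrt_nonneg (1 - τ ^ 2)
  rw [le_div_iff₀ (by positivity)]
  have hsD : s * Real.sqrt (1 - τ ^ 2) ≤ s := mul_le_of_le_one_right hs0 hD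
  -- The numerator is at least `(2/3 · 2.236 - 1.1181 - 0.2887) s ≥ 0.07 s`,
  -- while the denominator is at most `7/3`.
  linarith
end
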